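/- Assume ν ≥ 3. Let β_{m_1,…,m_ν} be real numbers with |β_{m_1,…,m_ν}| ≤ θ for all indices, let t = (τ_{1,1},…,τ_{ν,k_ν}) be drawn from the probability distribution on ℒ with density proportional to e^{−q(t)}, set u_{m_1…m_ν} = β_{m_1,…,m_ν}(τ_{1,m_1}+⋯+τ_{ν,m_ν}), and let U = Σ_{m_1,…,m_ν} u_{m_1…m_ν}³. Then there exists a constant Γ = Γ(θ,ν,ω,R,r) > 0, depending only on θ, ν, ω, R, r, such that E[U²] ≤ Γ·k^{−ν+2}. -/

import Mathlib

open MeasureTheory Real InnerProductSpace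

noncomputable section

variable {ν : ℕ}

/-- The coordinate index set of `ℝ^d`, `d = k_1 + ⋯ + k_ν`. -/
abbrev Idx (kk : Fin ν → ℕ) : Type := Σ j : Fin ν, Fin (kk j)

/-- The multi-index set, of cardinality `n = k_1 ⋯ k_ν`. -/
abbrev MIdx (kk : Fin ν → ℕ) : Type := ∀ j : Fin ν, Fin (kk j)

/-- The ambient Euclidean space `ℝ^d`. -/
abbrev Spc (kk : Fin ν → ℕ) : Type := EuclideanSpace ℝ (Idx kk)

/-- The coordinate functional `t ↦ τ_{j,i}`. -/
def coordL (kk : Fin ν → ℕ) (p : Idx kk) : Spc kk →ₗ[ℝ] ℝ where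
  toFun t := t p
  map_add' _ _ := rfl
  map_smul' _ _ := rfl

/-- The linear functional `t ↦ ⟨a_m, t⟩ = τ_{1,m_1} + ⋯ + τ_{ν,m_ν}`. -/
def linF (kk : Fin ν → ℕ) (m : MIdx kk) : Spc kk →ₗ[ℝ] ℝ :=
  ∑ j : Fin ν, coordL kk ⟨j, m j⟩

/-- The column `a_m` of the constraint matrix `A`. -/
def colA (kk : Fin ν → ℕ) (m : MIdx kk) : Spc kk :=
  (WithLp.equiv 2 (Idx kk → ℝ)).symm (fun p => if p.2 = m p.1 then 1 else 0)

/-- The quadratic form `q(t) = (1/2) ∑_m α_m (τ_{1,m_1} + ⋯ + τ_{ν,m_ν})²`. -/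
def qform (kk : Fin ν → ℕ) (α : MIdx kk → ℝ) (t : Spc kk) : ℝ :=
  (1/2) * ∑ m : MIdx kk, α m * (linF kk m t)^2

/-- The symmetric positive semidefinite matrix `B` with `q(t) = (1/2)⟨t, Bt⟩`,
given explicitly as `B = ∑_m α_m a_m a_mᵀ`. -/
def Bmat (kk : Fin ν → ℕ) (α : MIdx kk → ℝ) : Spc kk →ₗ[ℝ] Spc kk :=
  ∑ m : MIdx kk, α m • (linF kk m).smulRight (colA kk m)

/-- The sup norm `‖t‖_∞`. -/
def supNorm (kk : Fin ν → ℕ) (t : Spc kk) : ℝ := ‖(WithLp.equiv 2 (Idx kk → ℝ)) t‖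

/-- The subspace `ℒ = {t : τ_{j,k_j} = 0 for j = 2,…,ν}`. -/
def Lsub (kk : Fin ν → ℕ) (hk : ∀ j, 0 < kk j) : Submodule ℝ (Spc kk) :=
  ⨅ (j : {j : Fin ν // (j : ℕ) ≠ 0}),
    LinearMap.ker (coordL kk ⟨j.1, ⟨kk j.1 - 1, Nat.sub_lt (hk j.1) one_pos⟩⟩)

/-- The cubic polynomial `U(t) = ∑_m (β_m (τ_{1,m_1}+⋯+τ_{ν,m_ν}))³`. -/
def Upoly (kk : Fin ν → ℕ) (β : MIdx kk → ℝ) (t : Spc kk) : ℝ :=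
  ∑ m : MIdx kk, (β m * linF kk m t)^3

lemma hasDerivAt_aux (v : ℝ) (p p' : ℝ → ℝ) (hp : ∀ t, HasDerivAt p (p' t) t) :
    deriv (fun t => p t * Real.exp (v * t^2/2)) = 
      fun t => (p' t + v * t * p t) * Real.exp (v * t^2/2) := by
  funext t
  have h1 : HasDerivAt (fun t : ℝ => v * t^2/2) (v*t) t := by
    have := ((hasDerivAt_pow 2 t).const_mul v).div_const 2
    convert! this using 1
    simp; ring
  have := ((hp t).mul h1.exp).deriv
  rw [show (fun t => p t * Real.exp (v * t^2/2)) = (p * fun t => Real.exp (v * t^2/2)) from rfl, this]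
  ring

lemma iter_six (v : ℝ) :
    iteratedDeriv 6 (fun t => Real.exp (v * t^2/2)) 0 = 15 * v^3 := by
  have e0 : (fun t => Real.exp (v * t^2/2)) = fun t => (1:ℝ) * Real.exp (v * t^2/2) := by simp
  have hx : ∀ (n : ℕ) (t : ℝ), HasDerivAt (fun t : ℝ => t^n) (n * t^(n-1)) t := fun n t => hasDerivAt_pow n t
  rw [e0]
  simp only [iteratedDeriv_succ, iteratedDeriv_zero]
  rw [hasDerivAt_aux v (fun _ => 1) (fun _ => 0) (fun t => hasDerivAt_const t 1)]
  rw [hasDerivAt_aux v (fun t => 0 + v*t*1) (fun _ => v)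
    (fun t => by convert! (hasDerivAt_id t).const_mul v using 1
                 · funext x; simp
                 · simp)]
  rw [hasDerivAt_aux v (fun t => v + v*t*(0+v*t*1)) (fun t => 2*v^2*t)
    (fun t => by convert! ((hx 2 t).const_mul (v^2)).const_add v using 1
                 · funext x; ring
                 · simp; ring)]
  rw [hasDerivAt_aux v (fun t => 2*v^2*t + v*t*(v + v*t*(0+v*t*1))) (fun t => 3*v^2 + 3*v^3*t^2)
    (fun t => by convert! ((hx 1 t).const_mul (3*v^2)).add ((hx 3 t).const_mul (v^3)) using 1
                 · funext x; simp; ring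
                 · simp; ring)]
  rw [hasDerivAt_aux v (fun t => 3*v^2 + 3*v^3*t^2 + v*t*(2*v^2*t + v*t*(v + v*t*(0+v*t*1)))) 
      (fun t => 12*v^3*t+4*v^4*t^3)
    (fun t => by convert! (((hx 2 t).const_mul (6*v^3)).add ((hx 4 t).const_mul (v^4))).const_add (3*v^2) using 1
                 · funext x; simp; ring
                 · simp; ring)]
  rw [hasDerivAt_aux v (fun t => 12*v^3*t+4*v^4*t^3 + v*t*(3*v^2 + 3*v^3*t^2 + v*t*(2*v^2*t + v*t*(v + v*t*(0+v*t*1)))))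
      (fun t => 15*v^3 + 30*v^4*t^2+5*v^5*t^4)
    (fun t => by convert! (((hx 1 t).const_mul (15*v^3)).add ((hx 3 t).const_mul (10*v^4))).add ((hx 5 t).const_mul (v^5)) using 1
                 · funext x; simp; ring
                 · simp; ring)]
  simp

lemma sixth_moment {Ω : Type*} [MeasurableSpace Ω] (P : Measure Ω) (X : Ω → ℝ) (v : ℝ)
    (h : ∀ t, ProbabilityTheory.mgf X P t = Real.exp (v * t^2/2)) :
    Integrable (fun x => X x ^ 6) P ∧ ∫ x, X x ^ 6 ∂P = 15 * v^3 := by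
  have hI : ∀ t, Integrable (fun x => Real.exp (t * X x)) P := by
    intro t
    by_contra hc
    have := h t
    rw [ProbabilityTheory.mgf, integral_undef hc] at this
    exact (Real.exp_pos _).ne this
  have hs : ProbabilityTheory.integrableExpSet X P = Set.univ := by
    ext t; simpa [ProbabilityTheory.integrableExpSet] using hI t
  have h0 : (0:ℝ) ∈ interior (ProbabilityTheory.integrableExpSet X P) := by simp [hs]
  refine ⟨ProbabilityTheory.integrable_pow_of_mem_interior_integrableExpSet h0 6, ?_⟩
  have := ProbabilityTheory.iteratedDeriv_mgf_zero h0 6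
  rw [show ProbabilityTheory.mgf X P = fun t => Real.exp (v * t^2/2) from funext h, iter_six] at this
  rw [this]; rfl

lemma int_comb {Ω : Type*} [MeasurableSpace Ω] {P : Measure Ω} {f g : Ω → ℝ} {a b : ℝ} (c : ℝ)
    (hf : Integrable f P ∧ ∫ x, f x ∂P = a) (hg : Integrable g P ∧ ∫ x, g x ∂P = b) :
    Integrable (fun x => f x + c * g x) P ∧ ∫ x, (f x + c * g x) ∂P = a + c * b := by
  refine ⟨hf.1.add (hg.1.const_mul c), ?_⟩
  rw [integral_add hf.1 (hg.1.const_mul c), integral_const_mul, hf.2, hg.2]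

lemma pair_moment {Ω : Type*} [MeasurableSpace Ω] (P : Measure Ω) (X Y : Ω → ℝ) (vx vy c : ℝ)
    (h : ∀ a t, ProbabilityTheory.mgf (fun x => a * X x + Y x) P t = 
      Real.exp ((a^2*vx+2*a*c+vy) * t^2/2)) :
    Integrable (fun x => X x ^ 3 * Y x ^ 3) P ∧ 
      ∫ x, X x ^ 3 * Y x ^ 3 ∂P = 9 * vx * vy * c + 6 * c^3 := by
  have H := fun a => sixth_moment P _ _ (h a)
  have e : (fun x => X x ^ 3 * Y x ^ 3) = fun x =>
      0 + (-13/960) * (1 * X x + Y x)^6 + (13/960) * ((-1) * X x + Y x)^6 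
      + (8/960) * (2 * X x + Y x)^6 + (-8/960) * ((-2) * X x + Y x)^6
      + (-1/960) * (3 * X x + Y x)^6 + (1/960) * ((-3) * X x + Y x)^6 := by
    funext x; ring
  have h0 : Integrable (fun _ : Ω => (0:ℝ)) P ∧ ∫ _, (0:ℝ) ∂P = 0 := ⟨integrable_zero _ _ _, by simp⟩
  have K := int_comb (1/960) (int_comb (-1/960) (int_comb (-8/960) (int_comb (8/960) (int_comb (13/960)
    (int_comb (-13/960) h0 (H 1)) (H (-1))) (H 2)) (H (-2))) (H 3)) (H (-3))
  rw [e]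
  refine ⟨K.1, K.2.trans ?_⟩
  ring

section gauss
variable {V : Type*} [NormedAddCommGroup V] [InnerProductSpace ℝ V] [FiniteDimensional ℝ V]
  [MeasurableSpace V] [BorelSpace V] {M : Type*} [Fintype M]

lemma gauss_integrable (X : M → V →ₗ[ℝ] ℝ) (hinj : ∀ t, (∀ m, X m t = 0) → t = 0)
    (α : M → ℝ) (r : ℝ) (hr : 0 < r) (hα : ∀ m, r ≤ α m) :
    Integrable (fun t : V => Real.exp (-((1/2) * ∑ m, α m * (X m t)^2))) := by
  obtain ⟨C, hC0, hC⟩ := LinearMap.exists_antilipschitzWith (LinearMap.pi X) (by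
    rw [LinearMap.ker_eq_bot']
    intro t ht
    exact hinj t (fun m => congrFun ht m))
  have hC0' : (0:ℝ) < C := hC0
  have key : ∀ t : V, r / (2 * C^2) * ‖t‖^2 ≤ (1/2) * ∑ m, α m * (X m t)^2 := by
    intro t
    have h1 : ‖t‖ ≤ C * ‖(LinearMap.pi X) t‖ := by
      simpa using hC.le_mul_dist t 0
    have h2 : ‖(LinearMap.pi X) t‖ ≤ Real.sqrt (∑ m, (X m t)^2) := by
      rw [pi_norm_le_iff_of_nonneg (Real.sqrt_nonneg _)]
      intro m
      rw [Real.norm_eq_abs]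
      apply Real.abs_le_sqrt
      exact Finset.single_le_sum (f := fun m => (X m t)^2) (fun i _ => sq_nonneg _) (Finset.mem_univ m)
    have h3 : ‖t‖^2 ≤ C^2 * ∑ m, (X m t)^2 := by
      have h4 : ‖t‖ ≤ C * Real.sqrt (∑ m, (X m t)^2) := h1.trans (by gcongr)
      calc ‖t‖^2 ≤ (C * Real.sqrt (∑ m, (X m t)^2))^2 := by gcongr
        _ = _ := by rw [mul_pow, Real.sq_sqrt (Finset.sum_nonneg fun i _ => sq_nonneg _)]
    have h5 : r * ∑ m, (X m t)^2 ≤ ∑ m, α m * (X m t)^2 := by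
      rw [Finset.mul_sum]
      exact Finset.sum_le_sum fun m _ => mul_le_mul_of_nonneg_right (hα m) (sq_nonneg _)
    calc r / (2 * C^2) * ‖t‖^2 ≤ r / (2 * C^2) * (C^2 * ∑ m, (X m t)^2) := by gcongr
      _ = (1/2) * (r * ∑ m, (X m t)^2) := by field_simp
      _ ≤ _ := by linarith
  have hg : Integrable (fun t : V => Real.exp (-(r / (2 * C^2)) * ‖t‖^2)) := by
    have hb : 0 < r / (2 * (C:ℝ)^2) := by positivity
    have := (GaussianFourier.integrable_cexp_neg_mul_sq_norm_add (V := V) (b := ((r / (2 * (C:ℝ)^2) : ℝ) : ℂ))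
      (by simpa only [Complex.ofReal_re] using hb) 0 0).norm
    refine this.congr (Filter.Eventually.of_forall fun t => ?_)
    simp only [Complex.norm_exp]
    congr 1
    simp only [zero_mul, add_zero]
    rw [← Complex.ofReal_neg, ← Complex.ofReal_pow, ← Complex.ofReal_mul, Complex.ofReal_re]
  refine hg.mono' ?_ (Filter.Eventually.of_forall fun t => ?_)
  · apply Continuous.aestronglyMeasurable
    have : ∀ m, Continuous (X m) := fun m => (X m).continuous_of_finiteDimensional
    fun_prop
  · rw [Real.norm_eq_abs, abs_of_pos (Real.exp_pos _)]
    apply Real.exp_le_exp.2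
    have := key t
    linarith

lemma gauss_mgf (X : M → V →ₗ[ℝ] ℝ) (hinj : ∀ t, (∀ m, X m t = 0) → t = 0)
    (α : M → ℝ) (r : ℝ) (hr : 0 < r) (hα : ∀ m, r ≤ α m) (s : V) (x : ℝ) :
    ProbabilityTheory.mgf (fun t => ∑ m, α m * X m s * X m t)
      ((volume : Measure V).tilted (fun t => -((1/2) * ∑ m, α m * (X m t)^2))) x
      = Real.exp ((∑ m, α m * (X m s)^2) * x^2/2) := by
  have hI := gauss_integrable X hinj α r hr hα
  rw [ProbabilityTheory.mgf, integral_exp_tilted]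
  have hZ : 0 < ∫ t : V, Real.exp (-((1/2) * ∑ m, α m * (X m t)^2)) := integral_exp_pos hI
  rw [div_eq_iff hZ.ne']
  rw [← integral_sub_right_eq_self (fun t : V => Real.exp (-((1/2) * ∑ m, α m * (X m t)^2))) (x • s),
    ← integral_const_mul]
  congr 1
  funext t
  rw [← Real.exp_add]
  congr 1
  simp only [Pi.add_apply, map_sub, map_smul, smul_eq_mul, Finset.mul_sum, Finset.sum_mul, ← Finset.sum_neg_distrib,
    Finset.sum_div, ← Finset.sum_add_distrib]
  refine Finset.sum_congr rfl fun m _ => ?_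
  ring

theorem gauss_bound (X : M → V →ₗ[ℝ] ℝ) (hinj : ∀ t, (∀ m, X m t = 0) → t = 0)
    (α : M → ℝ) (r : ℝ) (hr : 0 < r) (hα : ∀ m, r ≤ α m) (K θ : ℝ) (hK : 0 ≤ K) (hθ : 0 ≤ θ)
    (hX : ∀ m t, (X m t)^2 ≤ K * ∑ n, (X n t)^2) (β : M → ℝ) (hβ : ∀ m, |β m| ≤ θ) :
    (∫ t : V, (∑ m, (β m * X m t)^3)^2 * Real.exp (-((1/2) * ∑ m, α m * (X m t)^2))) /
      (∫ t : V, Real.exp (-((1/2) * ∑ m, α m * (X m t)^2)))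
      ≤ 15 * (Fintype.card M * θ^6 * K^2 / r^3) := by
  -- Riesz
  let B : V →ₗ[ℝ] (V →ₗ[ℝ] ℝ) := ∑ m, (X m).smulRight (α m • X m)
  have hB : ∀ s t, B s t = ∑ m, α m * X m s * X m t := by
    intro s t
    simp only [B, LinearMap.sum_apply, LinearMap.smulRight_apply, LinearMap.smul_apply, smul_eq_mul]
    exact Finset.sum_congr rfl fun m _ => by ring
  have hlow : ∀ s, r * ∑ m, (X m s)^2 ≤ B s s := by
    intro s
    rw [hB, Finset.mul_sum]
    refine Finset.sum_le_sum fun m _ => ?_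
    have := mul_le_mul_of_nonneg_right (hα m) (sq_nonneg (X m s))
    linarith
  have hS0 : ∀ s, 0 ≤ ∑ m, (X m s)^2 := fun s => Finset.sum_nonneg fun i _ => sq_nonneg _
  have hBinj : Function.Injective B := by
    rw [← LinearMap.ker_eq_bot, LinearMap.ker_eq_bot']
    intro s hs
    have h1 := hlow s
    rw [hs, LinearMap.zero_apply] at h1
    have h2 : ∑ m, (X m s)^2 = 0 := le_antisymm (by
      by_contra hc
      push Not at hc
      nlinarith [mul_pos hr hc]) (hS0 s)
    rw [Finset.sum_eq_zero_iff_of_nonneg (fun i _ => sq_nonneg _)] at h2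
    exact hinj s fun m => by simpa using h2 m (Finset.mem_univ m)
  have hBsurj : Function.Surjective B :=
    (LinearMap.injective_iff_surjective_of_finrank_eq_finrank
      (Subspace.dual_finrank_eq (K := ℝ) (V := V)).symm).1 hBinj
  choose s hs using fun m => hBsurj (X m)
  have hsym : ∀ a b, B a b = B b a := by
    intro a b
    rw [hB, hB]
    exact Finset.sum_congr rfl fun m _ => by ring
  have hBs : ∀ a, B a a = ∑ m, α m * (X m a)^2 := by
    intro a
    rw [hB]
    exact Finset.sum_congr rfl fun m _ => by ring
  set c : M → M → ℝ := fun m n => X n (s m) with hc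
  have hcB : ∀ m n, c m n = B (s m) (s n) := by
    intro m n
    rw [hsym, hs]
  set P := (volume : Measure V).tilted (fun t => -((1/2) * ∑ m, α m * (X m t)^2)) with hP
  have hmom : ∀ m n, Integrable (fun t => X m t ^ 3 * X n t ^ 3) P ∧
      ∫ t, X m t ^ 3 * X n t ^ 3 ∂P = 9 * c m m * c n n * c m n + 6 * c m n ^ 3 := by
    intro m n
    apply pair_moment
    intro a x
    have := gauss_mgf X hinj α r hr hα (a • s m + s n) x
    rw [← hP] at this
    convert! this using 2
    · funext t
      rw [← hB, map_add, map_smul, LinearMap.add_apply, LinearMap.smul_apply, hs, hs, smul_eq_mul]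
    · rw [← hBs]
      simp only [map_add, map_smul, LinearMap.add_apply, LinearMap.smul_apply, smul_eq_mul, hcB]
      rw [hsym (s n) (s m)]
      ring
  have hE : (∫ t : V, (∑ m, (β m * X m t)^3)^2 * Real.exp (-((1/2) * ∑ m, α m * (X m t)^2))) /
      (∫ t : V, Real.exp (-((1/2) * ∑ m, α m * (X m t)^2)))
      = ∫ t, (∑ m, (β m * X m t)^3)^2 ∂P := by
    rw [hP, integral_tilted, ← integral_div]
    congr 1
    funext t
    rw [smul_eq_mul]
    ring
  rw [hE]
  have hU : ∀ t, (∑ m, (β m * X m t)^3)^2 = ∑ m, ∑ n, (β m ^3 * β n ^3) * (X m t ^ 3 * X n t ^ 3) := by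
    intro t
    rw [sq, Finset.sum_mul_sum]
    exact Finset.sum_congr rfl fun m _ => Finset.sum_congr rfl fun n _ => by ring
  have hE2 : ∫ t, (∑ m, (β m * X m t)^3)^2 ∂P =
      ∑ m, ∑ n, (β m ^3 * β n ^3) * (9 * c m m * c n n * c m n + 6 * c m n ^ 3) := by
    simp_rw [hU]
    rw [integral_finsetSum _ (fun m _ => integrable_finsetSum _ fun n _ => (hmom m n).1.const_mul _)]
    refine Finset.sum_congr rfl fun m _ => ?_
    rw [integral_finsetSum _ (fun n _ => (hmom m n).1.const_mul _)]
    refine Finset.sum_congr rfl fun n _ => ?_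
    rw [integral_const_mul, (hmom m n).2]
  rw [hE2]
  -- bounds
  have hSle : ∀ a, ∑ m, (X m a)^2 ≤ B a a / r := by
    intro a
    rw [le_div_iff₀ hr]
    linarith [hlow a]
  have hKr : 0 ≤ K / r := by positivity
  have hcnn : ∀ m, 0 ≤ c m m := by
    intro m
    rw [hcB]
    exact (mul_nonneg hr.le (hS0 _)).trans (hlow _)
  have hoff : ∀ m n, c m n ^ 2 ≤ K / r * c m m := by
    intro m n
    calc c m n ^2 ≤ K * ∑ l, (X l (s m))^2 := hX n (s m)
      _ ≤ K * (B (s m) (s m) / r) := by gcongr; exact hSle _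
      _ = K / r * c m m := by rw [hcB]; ring
  have hdiag : ∀ m, c m m ≤ K / r := by
    intro m
    have := hoff m m
    by_contra hcon
    push Not at hcon
    have h2 : 0 < c m m := hKr.trans_lt hcon
    nlinarith
  have habs : ∀ m n, |c m n| ≤ K / r := by
    intro m n
    apply abs_le_of_sq_le_sq _ hKr
    calc c m n ^ 2 ≤ K / r * c m m := hoff m n
      _ ≤ K / r * (K/r) := by gcongr; exact hdiag m
      _ = _ := by ring
  have hβ3 : ∀ m, |β m ^ 3| ≤ θ^3 := by
    intro m
    rw [abs_pow]
    gcongr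
    exact hβ m
  -- first part
  set γ : M → ℝ := fun m => β m ^ 3 * c m m with hγ
  have hγb : ∑ m, (γ m)^2 ≤ Fintype.card M * (θ^3 * (K / r))^2 := by
    have : ∀ m ∈ (Finset.univ : Finset M), (γ m)^2 ≤ (θ^3 * (K / r))^2 := by
      intro m _
      apply sq_le_sq'
      all_goals
        have : |γ m| ≤ θ^3 * (K/r) := by
          rw [hγ, abs_mul]
          gcongr
          · exact hβ3 m
          · exact habs m m
        have := abs_le.1 this
        linarith [this.1, this.2]
    have := Finset.sum_le_card_nsmul _ _ _ this
    simpa using this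
  have hfirst : ∑ m, ∑ n, γ m * γ n * c m n ≤ (∑ m, (γ m)^2) / r := by
    set w : V := ∑ m, γ m • s m with hw
    have h1 : ∑ m, ∑ n, γ m * γ n * c m n = B w w := by
      simp only [hw, map_sum, map_smul, LinearMap.sum_apply, LinearMap.smul_apply, smul_eq_mul, hcB, Finset.mul_sum]
      rw [Finset.sum_comm]
      refine Finset.sum_congr rfl fun m _ => Finset.sum_congr rfl fun n _ => ?_
      rw [hsym (s n) (s m)]
      ring
    have h2 : B w w = ∑ m, γ m * X m w := by
      have h2' : B w = ∑ m, γ m • X m := by simp only [hw, map_sum, map_smul, hs]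
      rw [h2']
      simp only [LinearMap.sum_apply, LinearMap.smul_apply, smul_eq_mul]
    have h3 : (B w w)^2 ≤ (∑ m, (γ m)^2) * (B w w / r) := by
      conv_lhs => rw [h2]
      refine (Finset.sum_mul_sq_le_sq_mul_sq _ _ _).trans ?_
      gcongr
      exact hSle w
    rw [h1]
    have h4 : 0 ≤ ∑ m, (γ m)^2 := Finset.sum_nonneg fun i _ => sq_nonneg _
    by_contra hcon
    push Not at hcon
    have h5 : 0 < B w w := lt_of_le_of_lt (by positivity) hcon
    have h6 : (∑ m, (γ m)^2) * (B w w / r) = (∑ m, (γ m)^2) / r * B w w := by ring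
    nlinarith
  -- second part
  have hsecond : ∑ m, ∑ n, (β m ^3 * β n ^3) * c m n ^ 3 ≤ 
      Fintype.card M * (θ^6 * (K/r * (K/r/r))) := by
    have h1 : ∀ m ∈ (Finset.univ : Finset M), ∑ n, (β m ^3 * β n ^3) * c m n ^ 3 ≤ θ^6 * (K/r * (K/r/r)) := by
      intro m _
      calc ∑ n, (β m ^3 * β n ^3) * c m n ^ 3 ≤ ∑ n, θ^6 * (K/r * (c m n)^2) := by
            refine Finset.sum_le_sum fun n _ => (le_abs_self _).trans ?_
            rw [abs_mul, abs_mul]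
            have : |c m n ^ 3| = |c m n| * c m n ^ 2 := by
              rw [abs_pow, ← sq_abs (c m n)]; ring
            rw [this, show θ^6 = θ^3 * θ^3 by ring]
            gcongr
            · exact hβ3 m
            · exact hβ3 n
            · exact habs m n
        _ = θ^6 * (K/r * ∑ n, (c m n)^2) := by rw [← Finset.mul_sum, ← Finset.mul_sum]
        _ ≤ θ^6 * (K/r * (K/r/r)) := by
            have : ∑ n, (c m n)^2 ≤ K / r / r := by
              refine (hSle (s m)).trans ?_
              rw [← hcB]
              gcongr
              exact hdiag m
            gcongr
    have := Finset.sum_le_card_nsmul _ _ _ h1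
    simpa using this
  have hsplit : ∑ m, ∑ n, (β m ^3 * β n ^3) * (9 * c m m * c n n * c m n + 6 * c m n ^ 3)
      = 9 * ∑ m, ∑ n, γ m * γ n * c m n + 6 * ∑ m, ∑ n, (β m ^3 * β n ^3) * c m n ^ 3 := by
    simp only [Finset.mul_sum, ← Finset.sum_add_distrib]
    refine Finset.sum_congr rfl fun m _ => Finset.sum_congr rfl fun n _ => ?_
    simp only [hγ]
    ring
  rw [hsplit]
  have hf2 : (∑ m, (γ m)^2) / r ≤ Fintype.card M * (θ^3 * (K / r))^2 / r := by gcongr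
  have e1 : (Fintype.card M : ℝ) * (θ^3 * (K / r))^2 / r = Fintype.card M * θ^6 * K^2 / r^3 := by
    field_simp
  have e2 : (Fintype.card M : ℝ) * (θ^6 * (K/r * (K/r/r))) = Fintype.card M * θ^6 * K^2 / r^3 := by
    field_simp
  rw [e1] at hf2
  rw [e2] at hsecond
  linarith
end gauss

lemma linF_apply (kk : Fin ν → ℕ) (n : MIdx kk) (t : Spc kk) :
    linF kk n t = ∑ i, t ⟨i, n i⟩ := by
  rw [linF, LinearMap.sum_apply]; rfl

lemma linF_update (kk : Fin ν → ℕ) (n : MIdx kk) (j : Fin ν) (a : Fin (kk j)) (t : Spc kk) :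
    linF kk (Function.update n j a) t = linF kk n t - t ⟨j, n j⟩ + t ⟨j, a⟩ := by
  have h : ∀ n : MIdx kk, linF kk n t = t ⟨j, n j⟩ + ∑ i ∈ Finset.univ.erase j, t ⟨i, n i⟩ := by
    intro n
    rw [Finset.add_sum_erase _ (fun i => t ⟨i, n i⟩) (Finset.mem_univ j)]
    exact linF_apply kk n t
  rw [h, h n, Function.update_self]
  have : ∑ i ∈ Finset.univ.erase j, t ⟨i, Function.update n j a i⟩ = ∑ i ∈ Finset.univ.erase j, t ⟨i, n i⟩ := by
    refine Finset.sum_congr rfl fun i hi => ?_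
    rw [Function.update_of_ne (Finset.ne_of_mem_erase hi)]
  rw [this]; ring

lemma sum_update_le (kk : Fin ν → ℕ) (j : Fin ν) (a : Fin (kk j)) (f : MIdx kk → ℝ) (hf : ∀ n, 0 ≤ f n) :
    ∑ n, f (Function.update n j a) ≤ kk j * ∑ n, f n := by
  let φ : MIdx kk → Fin (kk j) × MIdx kk := fun n => (n j, Function.update n j a)
  have hφ : Function.Injective φ := by
    intro n n' h
    have h1 : n j = n' j := congrArg Prod.fst h
    have h2 : Function.update n j a = Function.update n' j a := congrArg Prod.snd h
    funext i
    by_cases hi : i = j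
    · subst hi; exact h1
    · have := congrFun h2 i
      rwa [Function.update_of_ne hi, Function.update_of_ne hi] at this
  calc ∑ n, f (Function.update n j a) = ∑ p ∈ Finset.univ.image φ, f p.2 := by
        rw [Finset.sum_image (fun x _ y _ h => hφ h)]
    _ ≤ ∑ p : Fin (kk j) × MIdx kk, f p.2 :=
        Finset.sum_le_sum_of_subset_of_nonneg (Finset.subset_univ _) fun p _ _ => hf _
    _ = kk j * ∑ n, f n := by
        rw [Fintype.sum_prod_type]; simp

lemma linF_key (kk : Fin ν → ℕ) (k : ℝ) (hk1 : 1 ≤ k) (hkk : ∀ j, (kk j : ℝ) ≤ k)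
    (m : MIdx kk) (t : Spc kk) :
    (linF kk m t)^2 ≤ ((2 * ν + 1)^2 * k / Fintype.card (MIdx kk)) * ∑ n, (linF kk n t)^2 := by
  set N : ℝ := (Fintype.card (MIdx kk) : ℝ) with hN
  have hNpos : 0 < N := by
    have : Nonempty (MIdx kk) := ⟨m⟩
    rw [hN]; exact_mod_cast Fintype.card_pos
  set S := ∑ n, (linF kk n t)^2 with hS
  have hS0 : 0 ≤ S := Finset.sum_nonneg fun i _ => sq_nonneg _
  set Q := Real.sqrt (N * (k * S)) with hQ
  have hQ0 : 0 ≤ Q := Real.sqrt_nonneg _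
  have cs : ∀ g : MIdx kk → ℝ, ∑ n, (g n)^2 ≤ k * S → |∑ n, g n| ≤ Q := by
    intro g hg
    apply Real.abs_le_sqrt
    refine (sq_sum_le_card_mul_sum_sq).trans ?_
    rw [Finset.card_univ, ← hN]
    gcongr
  have hb : |∑ n, linF kk n t| ≤ Q := cs _ (by nlinarith)
  have ha : ∀ j, |∑ n, linF kk (Function.update n j (m j)) t| ≤ Q := by
    intro j
    apply cs
    refine (sum_update_le kk j (m j) (fun n => (linF kk n t)^2) (fun n => sq_nonneg _)).trans ?_
    exact mul_le_mul_of_nonneg_right (hkk j) hS0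
  have hid : N * linF kk m t = ∑ j, ∑ n, linF kk (Function.update n j (m j)) t
      - ν * ∑ n, linF kk n t + ∑ n, linF kk n t := by
    have h1 : ∀ j, ∑ n, linF kk (Function.update n j (m j)) t =
        ∑ n, linF kk n t - ∑ n : MIdx kk, t ⟨j, n j⟩ + N * t ⟨j, m j⟩ := by
      intro j
      simp only [linF_update, Finset.sum_add_distrib, Finset.sum_sub_distrib]
      simp [hN]
    simp only [h1, Finset.sum_add_distrib, Finset.sum_sub_distrib]
    rw [Finset.sum_comm (f := fun (j : Fin ν) (n : MIdx kk) => t ⟨j, n j⟩), ← Finset.mul_sum, ← linF_apply]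
    simp only [← linF_apply]
    simp
    ring
  have hbd : |N * linF kk m t| ≤ (2 * ν + 1) * Q := by
    rw [hid]
    have h1 : |∑ j, ∑ n, linF kk (Function.update n j (m j)) t| ≤ ν * Q := by
      refine (Finset.abs_sum_le_sum_abs _ _).trans ?_
      refine (Finset.sum_le_card_nsmul _ _ Q fun j _ => ha j).trans ?_
      simp
    have h2 : |(ν:ℝ) * ∑ n, linF kk n t| ≤ ν * Q := by
      rw [abs_mul, abs_of_nonneg (Nat.cast_nonneg ν)]
      gcongr
    rw [abs_le] at *
    constructor <;> linarith [h1.1, h1.2, h2.1, h2.2, hb.1, hb.2]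
  have hsq : (N * linF kk m t)^2 ≤ (2 * ν + 1)^2 * (N * (k * S)) := by
    have : (N * linF kk m t)^2 ≤ ((2 * ν + 1) * Q)^2 := sq_le_sq' (abs_le.1 hbd).1 (abs_le.1 hbd).2
    rwa [mul_pow _ Q, hQ, Real.sq_sqrt (by positivity)] at this
  rw [div_mul_eq_mul_div, le_div_iff₀ hNpos]
  refine le_of_mul_le_mul_left ?_ hNpos
  linarith

lemma linF_inj (kk : Fin ν → ℕ) (hν : 0 < ν) (hk : ∀ j, 0 < kk j) (t : Lsub kk hk)
    (h : ∀ m, linF kk m (t : Spc kk) = 0) : t = 0 := by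
  have hz : ∀ j : Fin ν, (j : ℕ) ≠ 0 → (t : Spc kk) ⟨j, ⟨kk j - 1, Nat.sub_lt (hk j) one_pos⟩⟩ = 0 := by
    intro j hj
    have : (t : Spc kk) ∈ Lsub kk hk := t.2
    unfold Lsub at this
    rw [Submodule.mem_iInf] at this
    exact this ⟨j, hj⟩
  have hd : ∀ (j : Fin ν) (a b : Fin (kk j)), (t : Spc kk) ⟨j, a⟩ = (t : Spc kk) ⟨j, b⟩ := by
    intro j a b
    let n : MIdx kk := fun i => ⟨0, hk i⟩
    have h1 := linF_update kk n j a (t : Spc kk)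
    have h2 := linF_update kk n j b (t : Spc kk)
    rw [h, h] at h1 h2
    linarith
  have hne : ∀ (j : Fin ν) (a : Fin (kk j)), (j : ℕ) ≠ 0 → (t : Spc kk) ⟨j, a⟩ = 0 := by
    intro j a hj
    rw [hd j a, hz j hj]
  apply Subtype.ext
  ext ⟨j, a⟩
  change (t : Spc kk) ⟨j, a⟩ = 0
  by_cases hj : (j : ℕ) = 0
  · let n : MIdx kk := Function.update (fun i => ⟨0, hk i⟩) j a
    have h1 := h n
    rw [linF_apply, Finset.sum_eq_single j] at h1
    · simpa [n] using h1
    · intro i _ hij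
      exact hne i _ (fun h0 => hij (Fin.ext (h0.trans hj.symm)))
    · simp
  · exact hne j a hj

/-- For `ν ≥ 3` and `|β_m| ≤ θ`, if `t` is drawn from the distribution
on `ℒ` with density proportional to `e^{−q(t)}` and `U = ∑_m u_m³` with
`u_m = β_m(τ_{1,m_1}+⋯+τ_{ν,m_ν})`, then there is `Γ = Γ(θ,ν,ω,R,r) > 0` with
`E[U²] ≤ Γ k^{−ν+2}`. -/
theorem statement14 (ν : ℕ) (hν : 3 ≤ ν) (θ ω r R : ℝ)
    (hθ : 0 ≤ θ) (hω0 : 0 < ω) (hω1 : ω ≤ 1) (hr : 0 < r) (hrR : r ≤ R) :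
    ∃ Γ : ℝ, 0 < Γ ∧
      ∀ (kk : Fin ν → ℕ) (hkk : ∀ j, 2 ≤ kk j) (hk : ∀ j, 0 < kk j) (k : ℝ),
        1 ≤ ω * k → (∀ j, ω * k ≤ kk j) → (∀ j, (kk j : ℝ) ≤ k) →
        ∀ (α : MIdx kk → ℝ), (∀ m, r ≤ α m) → (∀ m, α m ≤ R) →
        ∀ (β : MIdx kk → ℝ), (∀ m, |β m| ≤ θ) →
          (∫ t : ↥(Lsub kk hk),
              (Upoly kk β (t : Spc kk))^2 * Real.exp (-(qform kk α (t : Spc kk)))) /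
            (∫ t : ↥(Lsub kk hk), Real.exp (-(qform kk α (t : Spc kk))))
            ≤ Γ * k ^ ((2 : ℝ) - (ν : ℝ)) := by
  set A : ℝ := 15 * θ^6 * (2 * ν + 1)^4 / (r^3 * ω^ν) with hA
  have hA0 : 0 ≤ A := by positivity
  refine ⟨A + 1, by linarith, ?_⟩
  intro kk hkk hk k h1 hlo hhi α hα _ β hβ
  have hkpos : 0 < k := by
    by_contra hc
    push Not at hc
    nlinarith
  have hk1 : 1 ≤ k := by nlinarith
  have hNlow : (ω * k)^ν ≤ (Fintype.card (MIdx kk) : ℝ) := by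
    rw [Fintype.card_pi]
    push_cast
    calc (ω * k)^ν = ∏ _j : Fin ν, (ω * k) := by simp
      _ ≤ _ := Finset.prod_le_prod (fun i _ => by positivity) (fun j _ => by simpa using hlo j)
  set N : ℝ := (Fintype.card (MIdx kk) : ℝ) with hN
  have hpos : 0 < (ω * k)^ν := by positivity
  have hNpos : 0 < N := hpos.trans_le hNlow
  have main := gauss_bound (V := Lsub kk hk) (fun m => (linF kk m).comp (Lsub kk hk).subtype)
    (fun t ht => linF_inj kk (by omega) hk t ht) α r hr hα
    ((2 * ν + 1)^2 * k / N) θ (by positivity) hθ (fun m t => linF_key kk k hk1 hhi m t) β hβ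
  refine le_trans main ?_
  rw [← hN]
  have e1 : 15 * (N * θ^6 * ((2 * ν + 1)^2 * k / N)^2 / r^3) = 15 * θ^6 * (2 * ν + 1)^4 / r^3 * k^2 / N := by
    field_simp
  have e2 : k ^ ((2:ℝ) - ν) = k^2 / k^ν := by
    rw [Real.rpow_sub hkpos, Real.rpow_natCast]; norm_num
  rw [e1, e2]
  calc 15 * θ^6 * (2 * ν + 1)^4 / r^3 * k^2 / N ≤ 15 * θ^6 * (2 * ν + 1)^4 / r^3 * k^2 / (ω * k)^ν := by gcongr
    _ = A * (k^2 / k^ν) := by rw [hA, mul_pow]; field_simp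
    _ ≤ (A + 1) * (k^2/k^ν) := by gcongr; linarith
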